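/- Suppose f, g : ℝ^N → (−∞, ∞] are Borel measurable, m_f := inf f and m_g := inf g are finite, and m_f + m_g ≥ 0. Set m_{f,g} := (m_f − m_g)/2. Then f□g ≥ 0, f̌ − m_{f,g} ≥ 0, ǧ + m_{f,g} ≥ 0, and for every Young function φ: ‖(f□g)⁻¹‖_φ ≤ 2^{N−1} ( ‖(f̌ − m_{f,g})⁻¹‖_φ + ‖(ǧ + m_{f,g})⁻¹‖_φ ). -/

import Mathlib

open MeasureTheory Filter Set
open scoped ENNReal NNReal Pointwise

noncomputable section

/-- `ℝ^N` with the Euclidean structure and Lebesgue measure. -/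
abbrev ES (N : ℕ) := EuclideanSpace ℝ (Fin N)

variable {N : ℕ}

/-- The operation `(f ⊼ g)(x) = sup_y min (f (x - y)) (g y)` for extended-real valued
functions. -/
def supMinE (f g : ES N → EReal) (x : ES N) : EReal := ⨆ y, min (f (x - y)) (g y)

/-- The operation `(f ⊻ g)(x) = inf_y max (f (x - y)) (g y)` for extended-real valued
functions. -/
def infMaxE (f g : ES N → EReal) (x : ES N) : EReal := ⨅ y, max (f (x - y)) (g y)

/-- The infimal convolution `(f □ g)(x) = inf_y (f (x - y) + g y)`. -/
def infConvE (f g : ES N → EReal) (x : ES N) : EReal := ⨅ y, (f (x - y) + g y)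

/-- The operation `(f ⊼ g)(x) = sup_y min (f (x - y)) (g y)` for `[0,∞]`-valued functions. -/
def supMin (f g : ES N → ℝ≥0∞) (x : ES N) : ℝ≥0∞ := ⨆ y, min (f (x - y)) (g y)

/-- A Young function: a nonconstant, nondecreasing, convex, left-continuous
`φ : [0,∞] → [0,∞]` with `φ 0 = 0`. -/
structure IsYoungFunction (φ : ℝ≥0∞ → ℝ≥0∞) : Prop where
  nonconstant : ∃ x y, φ x ≠ φ y
  map_zero : φ 0 = 0
  mono : Monotone φ
  convex : ∀ ⦃a b x y : ℝ≥0∞⦄, a + b = 1 → φ (a * x + b * y) ≤ a * φ x + b * φ y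
  left_continuous : ∀ x, ContinuousWithinAt φ (Set.Iio x) x

/-- The Luxemburg norm `‖h‖_φ = inf {r > 0 | ∫ φ (r⁻¹ |h|) ≤ 1}` (`= ∞` if no such `r`),
for a nonnegative function `h`. -/
def luxNorm (φ : ℝ≥0∞ → ℝ≥0∞) (h : ES N → ℝ≥0∞) : ℝ≥0∞ :=
  sInf {r : ℝ≥0∞ | 0 < r ∧ ∫⁻ x, φ (r⁻¹ * h x) ≤ 1}

/-- The nonnegative part of an extended real, as an element of `[0,∞]`. -/
def toENN (a : EReal) : ℝ≥0∞ := if a = ⊤ then ⊤ else ENNReal.ofReal a.toReal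

/-- The reciprocal `1/a ∈ [0,∞]` of an extended real (intended for `a ≥ 0`), with the
conventions `1/0 = ∞` and `1/∞ = 0`. -/
def eInv (a : EReal) : ℝ≥0∞ := (toENN a)⁻¹

/-- The enclosing radius of a set `X ⊆ ℝ^N`: the infimum of the radii of closed balls
containing `X` (`0` for `X = ∅`, `∞` if `X` is unbounded). -/
def encRadius (X : Set (ES N)) : ℝ≥0∞ := sInf {r : ℝ≥0∞ | ∃ c : ES N, ∀ x ∈ X, edist x c ≤ r}

/-- The transform `f̂(x) = γ_f^+(|x|)` where `γ_f^+(t) = inf {ξ | ρ_f^+(ξ) ≤ t}` and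
`ρ_f^+(ξ)` is the enclosing radius of the upper level set `{f > ξ}`. -/
def hatE (f : ES N → EReal) (x : ES N) : EReal :=
  sInf {ξ : EReal | encRadius {y | ξ < f y} ≤ (‖x‖₊ : ℝ≥0∞)}

/-- The lower transform `f̌ = -((-f)^)`. -/
def checkE (f : ES N → EReal) (x : ES N) : EReal := - hatE (fun y => - f y) x

/-- The transform `f̂` for `[0,∞]`-valued functions. -/
def hatT (f : ES N → ℝ≥0∞) (x : ES N) : ℝ≥0∞ :=
  sInf {ξ : ℝ≥0∞ | encRadius {y | ξ < f y} ≤ (‖x‖₊ : ℝ≥0∞)}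

/-- The lower transform `f̌(x) = γ_f^-(|x|)`, `γ_f^-(t) = sup {ξ | ρ({f < ξ}) ≤ t}`,
for `[0,∞]`-valued functions. -/
def checkT (f : ES N → ℝ≥0∞) (x : ES N) : ℝ≥0∞ :=
  sSup {ξ : ℝ≥0∞ | encRadius {y | f y < ξ} ≤ (‖x‖₊ : ℝ≥0∞)}

/-- The `L^p` "norm" (`p ∈ [1,∞]`, essential supremum when `p = ∞`) of a `[0,∞]`-valued
function. -/
def pNorm (p : ℝ≥0∞) (h : ES N → ℝ≥0∞) : ℝ≥0∞ :=
  if p = ∞ then essSup h volume else (∫⁻ x, h x ^ p.toReal) ^ (1 / p.toReal)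

/-!
Subtracting `m` from `f` and adding it to `g` leaves `f □ g` unchanged and reduces the claim to
nonnegative `f` and `g`. Then `f □ g` dominates `f ⊻ g`, whose strict sublevel sets are Minkowski
sums `{f < ξ} + {g < ξ}`. Enclosing radii are subadditive under Minkowski sums, and the volume of a
set is at most that of a ball with its enclosing radius, so convexity of `t ↦ t ^ N` bounds the
volume of the sum by `2 ^ (N - 1)` times the sum of the volumes of the balls whose radii are the
enclosing radii of `{f < ξ}` and `{g < ξ}`. These balls are, up to exhaustion in `ξ`, contained in
the sublevel sets of `f̌` and `ǧ`.

The resulting comparison of distribution functions passes to Young integrals by the layer cake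
formula and then to Luxemburg norms. Since `f □ g` need not be Borel even for Borel `f` and `g`,
its Young integral is compared with the layer cake integral of outer measures.
-/

theorem measure_setOf_lt_le_of_forall_lt {α β : Type*} [MeasurableSpace α] (μ : Measure α)
    [LinearOrder β] [TopologicalSpace β] [OrderTopology β] [DenselyOrdered β]
    [FirstCountableTopology β] {h : α → β} {ξ : β} {C : ℝ≥0∞}
    (H : ∀ η < ξ, μ {x | h x < η} ≤ C) : μ {x | h x < ξ} ≤ C := by
  by_cases hξ : ∃ η, η < ξ
  · obtain ⟨η, hη⟩ := hξ
    obtain ⟨u, hu, hlt, htend⟩ := exists_seq_strictMono_tendsto' hη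
    have hunion : {x | h x < ξ} = ⋃ n, {x | h x < u n} := by
      ext x
      simp only [mem_ofPred_eq, mem_iUnion]
      exact ⟨fun hx => (htend.eventually (lt_mem_nhds hx)).exists,
        fun ⟨n, hn⟩ => hn.trans (hlt n).2⟩
    have hmono : Monotone fun n => {x | h x < u n} :=
      fun m n hmn x hx => lt_of_lt_of_le hx (hu.monotone hmn)
    rw [hunion, hmono.measure_iUnion]
    exact iSup_le fun n => H _ (hlt n).2
  · have hempty : {x | h x < ξ} = ∅ := eq_empty_of_forall_notMem fun x hx => hξ ⟨_, hx⟩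
    simp [hempty]

section LayerCake

variable {α : Type*} [MeasurableSpace α] (μ : Measure α) [SFinite μ]

theorem lintegral_eq_lintegral_meas_ofReal_lt {k : α → ℝ≥0∞} (hk : Measurable k) :
    ∫⁻ x, k x ∂μ = ∫⁻ t in Ioi (0 : ℝ), μ {x | ENNReal.ofReal t < k x} := by
  have hsub : MeasurableSet {p : α × ℝ | ENNReal.ofReal p.2 < k p.1} :=
    measurableSet_lt (by fun_prop) (by fun_prop)
  have volume_section (x : α) :
      volume.restrict (Ioi (0 : ℝ)) {t | ENNReal.ofReal t < k x} = k x := by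
    rw [Measure.restrict_apply' measurableSet_Ioi]
    by_cases hx : k x = ∞
    · simp [hx]
    · have : {t : ℝ | ENNReal.ofReal t < k x} ∩ Ioi 0 = Ioo 0 (k x).toReal := by
        ext t
        rw [mem_inter_iff, and_comm]
        exact and_congr_right fun ht => ENNReal.ofReal_lt_iff_lt_toReal (mem_Ioi.1 ht).le hx
      rw [this, Real.volume_Ioo, sub_zero, ENNReal.ofReal_toReal hx]
  calc ∫⁻ x, k x ∂μ
      = (μ.prod (volume.restrict (Ioi 0))) {p | ENNReal.ofReal p.2 < k p.1} := by
        rw [Measure.prod_apply hsub]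
        exact lintegral_congr fun x => (volume_section x).symm
    _ = ∫⁻ t in Ioi (0 : ℝ), μ {x | ENNReal.ofReal t < k x} := Measure.prod_apply_symm hsub

theorem lintegral_le_lintegral_meas_ofReal_lt (k : α → ℝ≥0∞) :
    ∫⁻ x, k x ∂μ ≤ ∫⁻ t in Ioi (0 : ℝ), μ {x | ENNReal.ofReal t < k x} := by
  obtain ⟨k', hk', hle, heq⟩ := exists_measurable_le_lintegral_eq μ k
  rw [heq, lintegral_eq_lintegral_meas_ofReal_lt μ hk']
  exact lintegral_mono fun t => measure_mono fun x hx => hx.trans_le (hle x)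

theorem lintegral_comp_le_of_measure_lt_le {l u : ℝ≥0∞ → ℝ≥0∞} (hlu : GaloisConnection l u)
    {h p q : α → ℝ≥0∞} {K : ℝ≥0∞} (hp : Measurable p) (hq : Measurable q)
    (H : ∀ ξ, μ {x | ξ < h x} ≤ K * (μ {x | ξ < p x} + μ {x | ξ < q x})) :
    ∫⁻ x, l (h x) ∂μ ≤ K * (∫⁻ x, l (p x) ∂μ + ∫⁻ x, l (q x) ∂μ) := by
  have hl : Measurable l := hlu.monotone_l.measurable
  let tail (k : α → ℝ≥0∞) (t : ℝ) : ℝ≥0∞ := μ {x | ENNReal.ofReal t < l (k x)}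
  have measurable_tail (k : α → ℝ≥0∞) : Measurable (tail k) :=
    Antitone.measurable fun s t hst =>
      measure_mono fun x hx => (ENNReal.ofReal_le_ofReal hst).trans_lt hx
  calc ∫⁻ x, l (h x) ∂μ
      ≤ ∫⁻ t in Ioi (0 : ℝ), tail h t := lintegral_le_lintegral_meas_ofReal_lt μ _
    _ ≤ ∫⁻ t in Ioi (0 : ℝ), K * (tail p t + tail q t) :=
        lintegral_mono fun t => by
          simpa only [tail, hlu.lt_iff_lt] using H (u (ENNReal.ofReal t))
    _ = K * ((∫⁻ t in Ioi (0 : ℝ), tail p t) + ∫⁻ t in Ioi (0 : ℝ), tail q t) := by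
        rw [← lintegral_add_left (measurable_tail p)]
        exact lintegral_const_mul K ((measurable_tail p).add (measurable_tail q))
    _ = K * (∫⁻ x, l (p x) ∂μ + ∫⁻ x, l (q x) ∂μ) := by
        congrm K * (?_ + ?_)
        · exact (lintegral_eq_lintegral_meas_ofReal_lt μ (hl.comp hp)).symm
        · exact (lintegral_eq_lintegral_meas_ofReal_lt μ (hl.comp hq)).symm

end LayerCake

namespace IsYoungFunction

variable {φ : ℝ≥0∞ → ℝ≥0∞}

theorem map_sSup (hφ : IsYoungFunction φ) (s : Set ℝ≥0∞) : φ (sSup s) = sSup (φ '' s) :=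
  MonotoneOn.map_sSup_of_continuousWithinAt
    ((continuousWithinAt_Iio_iff_Iic.1 (hφ.left_continuous _)).mono fun _ => le_sSup)
    (hφ.mono.monotoneOn s) hφ.map_zero

theorem galoisConnection (hφ : IsYoungFunction φ) :
    GaloisConnection φ fun t => sSup {w | φ w ≤ t} := by
  refine fun w t => ⟨fun hw => le_sSup hw, fun hw => (hφ.mono hw).trans ?_⟩
  rw [hφ.map_sSup]
  exact sSup_le (forall_mem_image.2 fun _ hv => hv)

theorem map_mul_le (hφ : IsYoungFunction φ) {c : ℝ≥0∞} (hc : c ≤ 1) (x : ℝ≥0∞) :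
    φ (c * x) ≤ c * φ x := by
  simpa [hφ.map_zero] using hφ.convex (x := x) (y := 0) (add_tsub_cancel_of_le hc)

theorem lintegral_inv_mul_le (hφ : IsYoungFunction φ) {α : Type*} [MeasurableSpace α]
    {μ : Measure α} {k : α → ℝ≥0∞} {s r : ℝ≥0∞} (hs : 0 < s) (hr : r ≠ ∞) (hsr : s ≤ r)
    (hk : ∫⁻ x, φ (s⁻¹ * k x) ∂μ ≤ 1) : ∫⁻ x, φ (r⁻¹ * k x) ∂μ ≤ s / r := by
  have hle : s / r ≤ 1 := ENNReal.div_le_of_le_mul (by rwa [one_mul])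
  have hinv : r⁻¹ = s / r * s⁻¹ := by
    rw [div_eq_mul_inv, mul_right_comm,
      ENNReal.mul_inv_cancel hs.ne' (ne_top_of_le_ne_top hr hsr), one_mul]
  calc ∫⁻ x, φ (r⁻¹ * k x) ∂μ
      ≤ ∫⁻ x, s / r * φ (s⁻¹ * k x) ∂μ := lintegral_mono fun x => by
        rw [hinv, mul_assoc]
        exact hφ.map_mul_le hle _
    _ = s / r * ∫⁻ x, φ (s⁻¹ * k x) ∂μ :=
        lintegral_const_mul' _ _ (hle.trans_lt ENNReal.one_lt_top).ne
    _ ≤ s / r := mul_le_of_le_one_right' hk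

theorem luxNorm_le_of_volume_lt_le (hφ : IsYoungFunction φ) {h p q : ES N → ℝ≥0∞} {K : ℝ≥0∞}
    (hK1 : 1 ≤ K) (hK : K ≠ ∞) (hp : Measurable p) (hq : Measurable q)
    (H : ∀ ξ, volume {x | ξ < h x} ≤ K * (volume {x | ξ < p x} + volume {x | ξ < q x})) :
    luxNorm φ h ≤ K * (luxNorm φ p + luxNorm φ q) := by
  have hK0 : K ≠ 0 := (zero_lt_one.trans_le hK1).ne'
  rw [← ENNReal.div_le_iff' hK0 hK, luxNorm.eq_def φ p, luxNorm.eq_def φ q, sInf_eq_iInf,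
    sInf_eq_iInf]
  refine ENNReal.le_iInf₂_add_iInf₂ fun s ⟨hs0, hs⟩ t ⟨ht0, ht⟩ => ENNReal.div_le_of_le_mul' ?_
  rcases eq_or_ne (K * (s + t)) ∞ with hr | hr
  · exact hr ▸ le_top
  have hr0 : 0 < K * (s + t) := ENNReal.mul_pos hK0 (by simp [hs0.ne'])
  have hsum : s + t ≤ K * (s + t) := le_mul_of_one_le_left' hK1
  have gc_mul : GaloisConnection ((K * (s + t))⁻¹ * ·) ((K * (s + t)) * ·) := fun _ _ =>
    ENNReal.inv_mul_le_iff hr0.ne' hr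
  refine sInf_le ⟨hr0, ?_⟩
  calc ∫⁻ x, φ ((K * (s + t))⁻¹ * h x)
      ≤ K * ((∫⁻ x, φ ((K * (s + t))⁻¹ * p x)) + ∫⁻ x, φ ((K * (s + t))⁻¹ * q x)) :=
        lintegral_comp_le_of_measure_lt_le volume (gc_mul.compose hφ.galoisConnection) hp hq H
    _ ≤ K * (s / (K * (s + t)) + t / (K * (s + t))) := by
        gcongr
        · exact hφ.lintegral_inv_mul_le hs0 hr (le_self_add.trans hsum) hs
        · exact hφ.lintegral_inv_mul_le ht0 hr (le_add_self.trans hsum) ht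
    _ = 1 := by
        rw [ENNReal.div_add_div_same, ← mul_div_assoc, ENNReal.div_self hr0.ne' hr]

end IsYoungFunction

section Balls

variable {E : Type*} [NormedAddCommGroup E] [NormedSpace ℝ E] [FiniteDimensional ℝ E]
  [Nontrivial E] [MeasurableSpace E] [BorelSpace E] (μ : Measure E) [μ.IsAddHaarMeasure]

theorem addHaar_closedEBall (x : E) (r : ℝ≥0∞) :
    μ (Metric.closedEBall x r) = r ^ Module.finrank ℝ E * μ (Metric.ball 0 1) := by
  induction r with
  | top =>
    rw [Metric.closedEBall_top, measure_univ_of_isAddLeftInvariant,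
      ENNReal.top_pow Module.finrank_pos.ne',
      ENNReal.top_mul (Metric.measure_ball_pos _ _ one_pos).ne']
  | coe r =>
    rw [Metric.closedEBall_coe, Measure.addHaar_closedBall _ _ r.coe_nonneg,
      ENNReal.ofReal_pow r.coe_nonneg, ENNReal.ofReal_coe_nnreal]

theorem addHaar_eball_eq_addHaar_closedEBall (x : E) (r : ℝ≥0∞) :
    μ (Metric.eball x r) = μ (Metric.closedEBall x r) := by
  induction r with
  | top => rw [Metric.eball_top, Metric.closedEBall_top]
  | coe r =>
    rw [Metric.eball_coe, Metric.closedEBall_coe, Measure.addHaar_closedBall_eq_addHaar_ball]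

theorem addHaar_eball_add_le (x : E) (r s : ℝ≥0∞) :
    μ (Metric.eball x (r + s)) ≤ 2 ^ (Module.finrank ℝ E - 1) *
      (μ (Metric.eball x r) + μ (Metric.eball x s)) := by
  have hpow := ENNReal.rpow_add_le_mul_rpow_add_rpow r s
    (Nat.one_le_cast.2 (Module.finrank_pos (R := ℝ) (M := E)))
  rw [← Nat.cast_pred Module.finrank_pos] at hpow
  simp only [ENNReal.rpow_natCast] at hpow
  simp only [addHaar_eball_eq_addHaar_closedEBall, addHaar_closedEBall]
  calc (r + s) ^ Module.finrank ℝ E * μ (Metric.ball 0 1)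
      ≤ 2 ^ (Module.finrank ℝ E - 1) * (r ^ Module.finrank ℝ E + s ^ Module.finrank ℝ E) *
          μ (Metric.ball 0 1) := by gcongr
    _ = _ := by ring

end Balls

theorem measurable_eInv : Measurable eInv :=
  measurable_ereal_toENNReal.inv

theorem lt_eInv_iff {ξ : ℝ≥0∞} {a : EReal} (ha : 0 ≤ a) :
    ξ < eInv a ↔ a < ((ξ⁻¹ : ℝ≥0∞) : EReal) := by
  have htoENN : (toENN a : EReal) = a := EReal.coe_toENNReal ha
  rw [eInv, ENNReal.lt_inv_iff_lt_inv, ← EReal.coe_ennreal_lt_coe_ennreal_iff, htoENN]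

theorem encRadius_mono {X Y : Set (ES N)} (h : X ⊆ Y) : encRadius X ≤ encRadius Y :=
  sInf_le_sInf fun _ ⟨c, hc⟩ => ⟨c, fun x hx => hc x (h hx)⟩

theorem encRadius_empty : encRadius (∅ : Set (ES N)) = 0 :=
  le_antisymm (sInf_le ⟨0, by simp⟩) bot_le

theorem encRadius_add_le (X Y : Set (ES N)) :
    encRadius (X + Y) ≤ encRadius X + encRadius Y := by
  rw [encRadius.eq_def X, encRadius.eq_def Y, sInf_eq_iInf, sInf_eq_iInf]
  refine ENNReal.le_iInf₂_add_iInf₂ fun r ⟨c, hc⟩ s ⟨d, hd⟩ => sInf_le ⟨c + d, ?_⟩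
  rintro _ ⟨x, hx, y, hy, rfl⟩
  exact (edist_add_add_le x y c d).trans (add_le_add (hc x hx) (hd y hy))

theorem volume_le_volume_eball_encRadius [NeZero N] (X : Set (ES N)) :
    volume X ≤ volume (Metric.eball (0 : ES N) (encRadius X)) := by
  let V (r : ℝ≥0∞) : ℝ≥0∞ := volume (Metric.closedEBall (0 : ES N) r)
  have hVmono : Monotone V := fun r s hrs =>
    measure_mono (Metric.closedEBall_subset_closedEBall hrs)
  have hVcont : Continuous V := by
    simp only [V, addHaar_closedEBall]
    exact (ENNReal.continuous_mul_const measure_ball_lt_top.ne).comp (ENNReal.continuous_pow _)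
  have hVtop : V ⊤ = ⊤ := by
    simp only [V, Metric.closedEBall_top, measure_univ_of_isAddLeftInvariant]
  rw [addHaar_eball_eq_addHaar_closedEBall]
  refine le_of_le_of_eq (le_sInf (forall_mem_image.2 ?_))
    (hVmono.map_sInf_of_continuousAt hVcont.continuousAt hVtop).symm
  rintro r ⟨c, hc⟩
  calc volume X ≤ volume (Metric.closedEBall c r) := measure_mono hc
    _ = V r := by simp only [V, addHaar_closedEBall]

theorem volume_add_le [NeZero N] (X Y : Set (ES N)) :
    volume (X + Y) ≤ 2 ^ (N - 1) *
      (volume (Metric.eball (0 : ES N) (encRadius X)) +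
        volume (Metric.eball (0 : ES N) (encRadius Y))) :=
  calc volume (X + Y)
      ≤ volume (Metric.eball (0 : ES N) (encRadius (X + Y))) := volume_le_volume_eball_encRadius _
    _ ≤ volume (Metric.eball (0 : ES N) (encRadius X + encRadius Y)) :=
        measure_mono (Metric.eball_subset_eball (encRadius_add_le X Y))
    _ ≤ _ := by
        simpa only [finrank_euclideanSpace_fin] using
          addHaar_eball_add_le volume (0 : ES N) (encRadius X) (encRadius Y)

theorem checkE_eq_sSup (f : ES N → EReal) (x : ES N) :
    checkE f x = sSup {η | encRadius {y | f y < η} ≤ ‖x‖ₑ} := by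
  have hneg (ξ : EReal) : {y | ξ < -f y} = {y | f y < -ξ} := by
    ext y
    exact EReal.lt_neg_comm
  refine le_antisymm (EReal.neg_le_of_neg_le (le_sInf fun ξ hξ => ?_)) (sSup_le fun η hη => ?_)
  · exact EReal.neg_le_of_neg_le (le_sSup (by rwa [mem_ofPred_eq, hneg] at hξ))
  · exact EReal.le_neg_of_le_neg (sInf_le (by rwa [mem_ofPred_eq, hneg, neg_neg]))

theorem measurable_checkE (f : ES N → EReal) : Measurable (checkE f) := by
  have hmono : Monotone fun t : ℝ≥0∞ => sSup {η | encRadius {y | f y < η} ≤ t} :=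
    fun s t hst => sSup_le_sSup fun η hη => le_trans hη hst
  simp only [funext (checkE_eq_sSup f)]
  exact hmono.measurable.comp measurable_enorm

theorem le_checkE {f : ES N → EReal} {a : EReal} (h : ∀ x, a ≤ f x) (x : ES N) :
    a ≤ checkE f x := by
  have hempty : {y | f y < a} = ∅ := by simpa [eq_empty_iff_forall_notMem] using h
  rw [checkE_eq_sSup]
  exact le_sSup (by simp [hempty, encRadius_empty])

theorem checkE_le_of_enorm_lt_encRadius {f : ES N → EReal} {η : EReal} {x : ES N}
    (hx : ‖x‖ₑ < encRadius {y | f y < η}) : checkE f x ≤ η := by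
  rw [checkE_eq_sSup]
  refine sSup_le fun ζ hζ => le_of_not_gt fun hlt => hx.not_ge ?_
  exact (encRadius_mono fun y hy => lt_trans hy hlt).trans hζ

theorem checkE_add_coe (f : ES N → EReal) (c : ℝ) (x : ES N) :
    checkE (fun y => f y + c) x = checkE f x + c := by
  have add_le (f : ES N → EReal) (c : ℝ) :
      checkE f x + c ≤ checkE (fun y => f y + c) x := by
    rw [checkE_eq_sSup f, checkE_eq_sSup]
    refine EReal.add_le_of_le_sub (sSup_le fun η hη => ?_)
    refine (EReal.le_sub_iff_add_le (.inl (EReal.coe_ne_bot c)) (.inl (EReal.coe_ne_top c))).2 ?_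
    have hsub : {y | f y + c < η + c} ⊆ {y | f y < η} :=
      ofPred_subset_ofPred.2 fun y hy => lt_of_add_lt_add_right hy
    exact le_sSup ((encRadius_mono hsub).trans hη)
  refine le_antisymm ?_ (add_le f c)
  calc checkE (fun y => f y + c) x
      = checkE (fun y => f y + c) x - c + c := EReal.sub_add_cancel.symm
    _ ≤ checkE (fun y => f y + c - c) x + c :=
        add_le_add_left (add_le (fun y => f y + c) (-c)) (c : EReal)
    _ = checkE f x + c := by simp only [EReal.add_sub_cancel_right]

theorem infConvE_nonneg {f g : ES N → EReal} (hf : ∀ x, 0 ≤ f x) (hg : ∀ x, 0 ≤ g x)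
    (x : ES N) : 0 ≤ infConvE f g x :=
  le_iInf fun y => add_nonneg (hf (x - y)) (hg y)

theorem infConvE_sub_coe_add_coe (f g : ES N → EReal) (c : ℝ) :
    infConvE (fun x => f x - c) (fun x => g x + c) = infConvE f g := by
  ext x
  refine iInf_congr fun y => ?_
  beta_reduce
  rw [sub_eq_add_neg, add_add_add_comm, ← EReal.coe_neg, ← EReal.coe_add, neg_add_cancel,
    EReal.coe_zero, add_zero]

theorem infMaxE_le_infConvE {f g : ES N → EReal} (hf : ∀ x, 0 ≤ f x) (hg : ∀ x, 0 ≤ g x)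
    (x : ES N) : infMaxE f g x ≤ infConvE f g x :=
  iInf_mono fun y => max_le (le_add_of_nonneg_right (hg y)) (le_add_of_nonneg_left (hf _))

theorem setOf_infMaxE_lt (f g : ES N → EReal) (ξ : EReal) :
    {x | infMaxE f g x < ξ} = {x | f x < ξ} + {x | g x < ξ} := by
  ext x
  simp only [infMaxE, mem_ofPred_eq, iInf_lt_iff, max_lt_iff, Set.mem_add]
  constructor
  · rintro ⟨y, hfy, hgy⟩
    exact ⟨x - y, hfy, y, hgy, sub_add_cancel x y⟩
  · rintro ⟨z, hz, y, hy, rfl⟩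
    exact ⟨y, by rwa [add_sub_cancel_right], hy⟩

theorem volume_infMaxE_lt_le [NeZero N] (f g : ES N → EReal) (ξ : EReal) :
    volume {x | infMaxE f g x < ξ} ≤
      2 ^ (N - 1) * (volume {x | checkE f x < ξ} + volume {x | checkE g x < ξ}) := by
  -- A ball of radius `ρ({f < η})` lies only in the non-strict sublevel set `{f̌ ≤ η}`.
  refine measure_setOf_lt_le_of_forall_lt _ fun η hη => ?_
  have eball_subset (f : ES N → EReal) :
      Metric.eball 0 (encRadius {y | f y < η}) ⊆ {x | checkE f x < ξ} := fun x hx =>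
    (checkE_le_of_enorm_lt_encRadius (by rwa [← edist_zero_right])).trans_lt hη
  rw [setOf_infMaxE_lt]
  refine (volume_add_le _ _).trans ?_
  gcongr <;> exact eball_subset _

theorem luxNorm_eInv_infConvE_le [NeZero N] {f g : ES N → EReal} (hf : ∀ x, 0 ≤ f x)
    (hg : ∀ x, 0 ≤ g x) {φ : ℝ≥0∞ → ℝ≥0∞} (hφ : IsYoungFunction φ) :
    luxNorm φ (fun x => eInv (infConvE f g x)) ≤
      2 ^ (N - 1) *
        (luxNorm φ (fun x => eInv (checkE f x)) + luxNorm φ (fun x => eInv (checkE g x))) := by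
  refine hφ.luxNorm_le_of_volume_lt_le (one_le_pow₀ one_le_two) (by simp)
    (measurable_eInv.comp (measurable_checkE f)) (measurable_eInv.comp (measurable_checkE g))
    fun ξ => ?_
  simp only [lt_eInv_iff (infConvE_nonneg hf hg _), lt_eInv_iff (le_checkE hf _),
    lt_eInv_iff (le_checkE hg _)]
  exact (measure_mono fun x hx => (infMaxE_le_infConvE hf hg x).trans_lt hx).trans
    (volume_infMaxE_lt_le f g _)

theorem luxNorm_inv_infConv_le_general {N : ℕ} (hN : 0 < N) {f g : ES N → EReal} {m : ℝ}
    (hf : ∀ x, (m : EReal) ≤ f x) (hg : ∀ x, ((-m : ℝ) : EReal) ≤ g x) :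
    (∀ x, 0 ≤ infConvE f g x) ∧
    (∀ x, 0 ≤ checkE f x - m) ∧
    (∀ x, 0 ≤ checkE g x + m) ∧
    ∀ φ : ℝ≥0∞ → ℝ≥0∞, IsYoungFunction φ →
      luxNorm φ (fun x => eInv (infConvE f g x)) ≤
        2 ^ (N - 1) *
          (luxNorm φ (fun x => eInv (checkE f x - m)) +
            luxNorm φ (fun x => eInv (checkE g x + m))) := by
  have : NeZero N := ⟨hN.ne'⟩
  have hf₀ (x : ES N) : 0 ≤ f x - m :=
    (EReal.sub_nonneg (.inr (EReal.coe_ne_top m)) (.inr (EReal.coe_ne_bot m))).2 (hf x)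
  have hg₀ (x : ES N) : 0 ≤ g x + m := by
    simpa only [EReal.coe_neg, sub_eq_add_neg, neg_neg] using
      (EReal.sub_nonneg (.inr (EReal.coe_ne_top (-m))) (.inr (EReal.coe_ne_bot (-m)))).2 (hg x)
  have checkE_sub (x : ES N) : checkE f x - m = checkE (fun y => f y - m) x := by
    simpa only [sub_eq_add_neg, EReal.coe_neg] using (checkE_add_coe f (-m) x).symm
  simp only [← infConvE_sub_coe_add_coe f g m, checkE_sub, ← checkE_add_coe]
  exact ⟨infConvE_nonneg hf₀ hg₀, le_checkE hf₀, le_checkE hg₀,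
    fun φ hφ => luxNorm_eInv_infConvE_le hf₀ hg₀ hφ⟩

theorem luxNorm_inv_infConv_le {N : ℕ} (hN : 0 < N)
    (f g : ES N → EReal) (hf : Measurable f) (hg : Measurable g)
    (hf' : ∀ x, f x ≠ ⊥) (hg' : ∀ x, g x ≠ ⊥)
    (a b : ℝ) (ha : (⨅ x, f x) = (a : EReal)) (hb : (⨅ x, g x) = (b : EReal))
    (hab : 0 ≤ a + b) :
    (∀ x, 0 ≤ infConvE f g x) ∧
    (∀ x, 0 ≤ checkE f x - (((a - b) / 2 : ℝ) : EReal)) ∧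
    (∀ x, 0 ≤ checkE g x + (((a - b) / 2 : ℝ) : EReal)) ∧
    ∀ φ : ℝ≥0∞ → ℝ≥0∞, IsYoungFunction φ →
      luxNorm φ (fun x => eInv (infConvE f g x)) ≤
        2 ^ (N - 1) *
          (luxNorm φ (fun x => eInv (checkE f x - (((a - b) / 2 : ℝ) : EReal))) +
            luxNorm φ (fun x => eInv (checkE g x + (((a - b) / 2 : ℝ) : EReal)))) := by
  refine luxNorm_inv_infConv_le_general hN (fun x => ?_) (fun x => ?_)
  · exact (EReal.coe_le_coe_iff.2 (by linarith)).trans (ha ▸ iInf_le f x)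
  · exact (EReal.coe_le_coe_iff.2 (by linarith)).trans (hb ▸ iInf_le g x)

end
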